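/- arXiv:math/0606374 — 3 statements merged into one kernel-verified Lean document; each statement's English description precedes it below -/
import Mathlib

section
/- Let q₁, q₂ ∈ F₂[x₁,…,x_m] be homogeneous polynomials of degree 2 such that β(q₁) and β(q₂) both lie in the ideal (q₁, q₂). Then there exists an invertible matrix N ∈ GL₂(F₂) such that, writing (q₁', q₂')ᵀ = N·(q₁, q₂)ᵀ, there are homogeneous linear forms ℓ₁, ℓ₂ with β(q₁') = ℓ₁q₁' and β(q₂') = ℓ₂q₂'. In other words, every Bockstein closed quadratic map with two-dimensional codomain is diagonalizable. -/
/-!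
In characteristic two the Bockstein satisfies `β ∘ β = 0` and `β ℓ = ℓ²` for linear forms `ℓ`.
Comparing degrees, Bockstein closedness reads `β q₁ = a q₁ + b q₂` and `β q₂ = c q₁ + d q₂` with
linear forms `a, b, c, d`, and applying `β` once more gives
`b (c q₁ + (a + b + d) q₂) = 0` and `c ((a + c + d) q₁ + b q₂) = 0`.
If `b = 0` or `c = 0`, one of the `qᵢ` is an eigenvector, and the surviving relation shows that
another nonzero combination of `q₁` and `q₂` is one too. Otherwise the determinant of the `2 × 2`
system, which equals `(a + d) (a + b + c + d)`, annihilates `q₂`, so one factor does, and hence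
`c q₁ = b q₂` or `q₁ = q₂`. In both cases `q₁` and `q₂` are eigenvectors.
-/

open MvPolynomial

/-- The Bockstein operator: the unique `F₂`-derivation of `F₂[x₁,…,x_m]`
with `β(x_i) = x_i²`, given by `β(f) = Σ_i x_i² ∂f/∂x_i`. -/
noncomputable def bockstein {m : ℕ} (f : MvPolynomial (Fin m) (ZMod 2)) :
    MvPolynomial (Fin m) (ZMod 2) :=
  ∑ i : Fin m, X i ^ 2 * pderiv i f

section Derivation

variable {k R : Type*} [CommSemiring k] [CommRing R] [Algebra k R] {D : Derivation k R R}
  {L : AddSubgroup R} {a b c d p q q₁ q₂ : R}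

/-- `q` is an eigenvector, possibly zero, of the derivation `D` with an eigenvalue in `L`. The
eigenvalue is an element of the ring `R`, not a scalar. -/
def HasEigenvalueIn (D : Derivation k R R) (L : AddSubgroup R) (q : R) : Prop :=
  ∃ l ∈ L, D q = l * q

variable [CharP R 2]

theorem derivation_comp_self_mul (D : Derivation k R R) (f g : R) :
    D (D (f * g)) = f * D (D g) + g * D (D f) := by
  simp only [Derivation.leibniz, map_add, smul_eq_mul]
  linear_combination (D f * D g) * CharTwo.two_eq_zero (R := R)

theorem off_diagonal_mul_eq_zero (ha : D a = a ^ 2) (hb : D b = b ^ 2)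
    (hp : D p = a * p + b * q) (hq : D q = c * p + d * q) (hDp : D (D p) = 0) :
    b * (c * p + (a + b + d) * q) = 0 := by
  rw [hp, map_add, Derivation.leibniz, Derivation.leibniz, ha, hb, hp, hq] at hDp
  simp only [smul_eq_mul] at hDp
  linear_combination hDp - (a ^ 2 * p) * CharTwo.two_eq_zero (R := R)

variable [IsDomain R]

theorem hasEigenvalueIn_or_add_of_triangular (hL : ∀ l ∈ L, D l = l ^ 2)
    (hc : c ∈ L) (hd : d ∈ L) (hq₁ : D q₁ = a * q₁) (hq₂ : D q₂ = c * q₁ + d * q₂)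
    (hDq₂ : D (D q₂) = 0) : HasEigenvalueIn D L q₂ ∨ HasEigenvalueIn D L (q₁ + q₂) := by
  have relation : c * ((d + c + a) * q₁) = 0 := by
    simpa using off_diagonal_mul_eq_zero (p := q₂) (q := q₁) (c := 0) (d := a)
      (hL d hd) (hL c hc) (by rw [hq₂, add_comm]) (by rw [hq₁, zero_mul, zero_add]) hDq₂
  rcases mul_eq_zero.1 relation with hc₀ | hsum
  · exact Or.inl ⟨d, hd, by rw [hq₂, hc₀, zero_mul, zero_add]⟩
  · refine Or.inr ⟨d, hd, ?_⟩
    rw [map_add, hq₁, hq₂]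
    linear_combination hsum - (d * q₁) * CharTwo.two_eq_zero (R := R)

theorem mul_eq_mul_or_eq_of_linear_system (hc : c ≠ 0) (h₁ : c * q₁ + (a + b + d) * q₂ = 0)
    (h₂ : (a + c + d) * q₁ + b * q₂ = 0) : c * q₁ = b * q₂ ∨ q₁ = q₂ := by
  have two : (2 : R) = 0 := CharTwo.two_eq_zero
  have det_mul : q₂ * (a + d) * (a + b + c + d) = 0 := by
    linear_combination (a + c + d) * h₁ - c * h₂
  rcases mul_eq_zero.1 det_mul with h | h
  · left
    linear_combination h₁ - h - b * q₂ * two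
  · right
    refine mul_left_cancel₀ hc ?_
    linear_combination h₁ - q₂ * h

theorem hasEigenvalueIn_of_off_diagonal_ne_zero (hL : ∀ l ∈ L, D l = l ^ 2)
    (ha : a ∈ L) (hb : b ∈ L) (hc : c ∈ L) (hd : d ∈ L)
    (hq₁ : D q₁ = a * q₁ + b * q₂) (hq₂ : D q₂ = c * q₁ + d * q₂)
    (hDq₁ : D (D q₁) = 0) (hDq₂ : D (D q₂) = 0) (hb₀ : b ≠ 0) (hc₀ : c ≠ 0) :
    HasEigenvalueIn D L q₁ ∧ HasEigenvalueIn D L q₂ := by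
  have relation₁ : c * q₁ + (a + b + d) * q₂ = 0 :=
    (mul_eq_zero.1 (off_diagonal_mul_eq_zero (hL a ha) (hL b hb) hq₁ hq₂
      hDq₁)).resolve_left hb₀
  have relation₂ : b * q₂ + (d + c + a) * q₁ = 0 :=
    (mul_eq_zero.1 (off_diagonal_mul_eq_zero (hL d hd) (hL c hc)
      (by rw [hq₂, add_comm]) (by rw [hq₁, add_comm]) hDq₂)).resolve_left hc₀
  rcases mul_eq_mul_or_eq_of_linear_system hc₀ relation₁ (by linear_combination relation₂)
    with h | rfl
  · exact ⟨⟨a + c, L.add_mem ha hc, by linear_combination hq₁ - h⟩,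
      ⟨b + d, L.add_mem hb hd, by linear_combination hq₂ + h⟩⟩
  · exact ⟨⟨a + b, L.add_mem ha hb, by linear_combination hq₁⟩,
      ⟨c + d, L.add_mem hc hd, by linear_combination hq₂⟩⟩

theorem two_of_three_hasEigenvalueIn (hL : ∀ l ∈ L, D l = l ^ 2)
    (ha : a ∈ L) (hb : b ∈ L) (hc : c ∈ L) (hd : d ∈ L)
    (hq₁ : D q₁ = a * q₁ + b * q₂) (hq₂ : D q₂ = c * q₁ + d * q₂)
    (hDq₁ : D (D q₁) = 0) (hDq₂ : D (D q₂) = 0) :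
    (HasEigenvalueIn D L q₁ ∧ HasEigenvalueIn D L q₂) ∨
      (HasEigenvalueIn D L q₁ ∧ HasEigenvalueIn D L (q₁ + q₂)) ∨
      (HasEigenvalueIn D L (q₁ + q₂) ∧ HasEigenvalueIn D L q₂) := by
  by_cases hb₀ : b = 0
  · have hq₁' : D q₁ = a * q₁ := by rw [hq₁, hb₀, zero_mul, add_zero]
    have eigen₁ : HasEigenvalueIn D L q₁ := ⟨a, ha, hq₁'⟩
    rcases hasEigenvalueIn_or_add_of_triangular hL hc hd hq₁' hq₂ hDq₂ with eigen₂ | eigen_add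
    · exact Or.inl ⟨eigen₁, eigen₂⟩
    · exact Or.inr (Or.inl ⟨eigen₁, eigen_add⟩)
  by_cases hc₀ : c = 0
  · have hq₂' : D q₂ = d * q₂ := by rw [hq₂, hc₀, zero_mul, zero_add]
    have eigen₂ : HasEigenvalueIn D L q₂ := ⟨d, hd, hq₂'⟩
    rcases hasEigenvalueIn_or_add_of_triangular hL hb ha hq₂' (by rw [hq₁, add_comm]) hDq₁
      with eigen₁ | eigen_add
    · exact Or.inl ⟨eigen₁, eigen₂⟩
    · exact Or.inr (Or.inr ⟨add_comm q₂ q₁ ▸ eigen_add, eigen₂⟩)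
  · exact Or.inl (hasEigenvalueIn_of_off_diagonal_ne_zero hL ha hb hc hd hq₁ hq₂ hDq₁ hDq₂ hb₀ hc₀)

end Derivation

section Homogeneous

variable {σ S : Type*} [CommSemiring S] {d n : ℕ} {p q₁ q₂ : MvPolynomial σ S}

attribute [local instance] MvPolynomial.gradedAlgebra

theorem homogeneousComponent_mul_of_isHomogeneous_right (d : ℕ) (p : MvPolynomial σ S)
    {q : MvPolynomial σ S} (hq : q.IsHomogeneous n) :
    homogeneousComponent (d + n) (p * q) = homogeneousComponent d p * q := by
  simp only [← decomposition.decompose'_apply]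
  exact DirectSum.coe_decompose_mul_add_of_right_mem (homogeneousSubmodule σ S) hq

theorem exists_isHomogeneous_of_mem_span_pair (h₁ : q₁.IsHomogeneous n)
    (h₂ : q₂.IsHomogeneous n) (hp : p.IsHomogeneous (d + n)) (h : p ∈ Ideal.span {q₁, q₂}) :
    ∃ a b : MvPolynomial σ S, a.IsHomogeneous d ∧ b.IsHomogeneous d ∧ p = a * q₁ + b * q₂ := by
  obtain ⟨u, v, rfl⟩ := Ideal.mem_span_pair.1 h
  refine ⟨homogeneousComponent d u, homogeneousComponent d v,
    homogeneousComponent_isHomogeneous _ _, homogeneousComponent_isHomogeneous _ _, ?_⟩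
  rw [← homogeneousComponent_mul_of_isHomogeneous_right d u h₁,
    ← homogeneousComponent_mul_of_isHomogeneous_right d v h₂, ← map_add,
    homogeneousComponent_eq_self hp]

theorem isHomogeneous_X_mul_pderiv (i : σ) (hp : p.IsHomogeneous n) :
    (X i * pderiv i p).IsHomogeneous n := by
  cases n with
  | zero =>
    rw [← totalDegree_zero_iff_isHomogeneous, totalDegree_eq_zero_iff_eq_C] at hp
    rw [hp, pderiv_C, mul_zero]
    exact isHomogeneous_zero _ _ _
  | succ n => simpa [add_comm] using (isHomogeneous_X S i).mul (hp.pderiv (i := i))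

end Homogeneous

section Bockstein

variable {m n : ℕ} {q : MvPolynomial (Fin m) (ZMod 2)}

/-- The Bockstein operator `bockstein` as a bundled derivation, so that the results on general
derivations apply to it. -/
noncomputable def bocksteinDerivation (m : ℕ) :
    Derivation (ZMod 2) (MvPolynomial (Fin m) (ZMod 2)) (MvPolynomial (Fin m) (ZMod 2)) :=
  ∑ i : Fin m, (X i ^ 2 : MvPolynomial (Fin m) (ZMod 2)) • pderiv i

theorem bocksteinDerivation_apply (f : MvPolynomial (Fin m) (ZMod 2)) :
    bocksteinDerivation m f = bockstein f := by
  rw [bocksteinDerivation, ← Derivation.coeFnAddMonoidHom_apply, map_sum, Finset.sum_apply]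
  rfl

theorem bocksteinDerivation_X (i : Fin m) : bocksteinDerivation m (X i) = X i ^ 2 := by
  classical
  simp [bocksteinDerivation_apply, bockstein, pderiv_X, Pi.single_apply]

theorem bocksteinDerivation_bocksteinDerivation (f : MvPolynomial (Fin m) (ZMod 2)) :
    bocksteinDerivation m (bocksteinDerivation m f) = 0 := by
  induction f using MvPolynomial.induction_on with
  | C a => simp
  | add f g hf hg => rw [map_add, map_add, hf, hg, add_zero]
  | mul_X f i hf =>
    have hX : bocksteinDerivation m (bocksteinDerivation m (X i)) = 0 := by
      rw [bocksteinDerivation_X, sq, Derivation.leibniz, CharTwo.add_self_eq_zero]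
    rw [derivation_comp_self_mul, hf, hX, mul_zero, mul_zero, add_zero]

theorem bocksteinDerivation_eq_sq_of_isHomogeneous_one {l : MvPolynomial (Fin m) (ZMod 2)}
    (hl : l.IsHomogeneous 1) : bocksteinDerivation m l = l ^ 2 := by
  have hl_span : l ∈ Submodule.span (ZMod 2) (Set.range X) := by
    rwa [← homogeneousSubmodule_one_eq_span_X, mem_homogeneousSubmodule]
  let square := (frobenius (MvPolynomial (Fin m) (ZMod 2)) 2).toAddMonoidHom.toZModLinearMap 2
  refine LinearMap.eqOn_span (f := (bocksteinDerivation m).toLinearMap) (g := square) ?_ hl_span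
  rintro _ ⟨i, rfl⟩
  exact bocksteinDerivation_X i

theorem isHomogeneous_bockstein (hq : q.IsHomogeneous n) :
    (bockstein q).IsHomogeneous (1 + n) := by
  refine IsHomogeneous.sum _ _ _ fun i _ => ?_
  rw [sq, mul_assoc]
  exact (isHomogeneous_X _ i).mul (isHomogeneous_X_mul_pderiv i hq)

end Bockstein

theorem two_dimensional_bockstein_closed_diagonalizable_general {m n : ℕ}
    (q₁ q₂ : MvPolynomial (Fin m) (ZMod 2))
    (h₁ : q₁.IsHomogeneous n) (h₂ : q₂.IsHomogeneous n)
    (hB₁ : bockstein q₁ ∈ Ideal.span {q₁, q₂})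
    (hB₂ : bockstein q₂ ∈ Ideal.span {q₁, q₂}) :
    ∃ N : Matrix (Fin 2) (Fin 2) (ZMod 2), IsUnit N ∧
      ∃ ℓ₁ ℓ₂ : MvPolynomial (Fin m) (ZMod 2), ℓ₁.IsHomogeneous 1 ∧ ℓ₂.IsHomogeneous 1 ∧
        bockstein (C (N 0 0) * q₁ + C (N 0 1) * q₂) =
          ℓ₁ * (C (N 0 0) * q₁ + C (N 0 1) * q₂) ∧
        bockstein (C (N 1 0) * q₁ + C (N 1 1) * q₂) =
          ℓ₂ * (C (N 1 0) * q₁ + C (N 1 1) * q₂) := by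
  obtain ⟨a, b, ha, hb, hq₁⟩ :=
    exists_isHomogeneous_of_mem_span_pair h₁ h₂ (isHomogeneous_bockstein h₁) hB₁
  obtain ⟨c, d, hc, hd, hq₂⟩ :=
    exists_isHomogeneous_of_mem_span_pair h₁ h₂ (isHomogeneous_bockstein h₂) hB₂
  rw [← bocksteinDerivation_apply] at hq₁ hq₂
  simp only [← bocksteinDerivation_apply]
  have eigen := two_of_three_hasEigenvalueIn
    (L := (homogeneousSubmodule (Fin m) (ZMod 2) 1).toAddSubgroup)
    (fun _ hl => bocksteinDerivation_eq_sq_of_isHomogeneous_one hl) ha hb hc hd hq₁ hq₂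
    (bocksteinDerivation_bocksteinDerivation q₁) (bocksteinDerivation_bocksteinDerivation q₂)
  rcases eigen with ⟨⟨ℓ₁, hℓ₁, e₁⟩, ⟨ℓ₂, hℓ₂, e₂⟩⟩ | ⟨⟨ℓ₁, hℓ₁, e₁⟩, ⟨ℓ₂, hℓ₂, e₂⟩⟩ |
    ⟨⟨ℓ₁, hℓ₁, e₁⟩, ⟨ℓ₂, hℓ₂, e₂⟩⟩
  · exact ⟨1, isUnit_one, ℓ₁, ℓ₂, hℓ₁, hℓ₂, by simpa using e₁, by simpa using e₂⟩
  · exact ⟨!![1, 0; 1, 1], by simp [Matrix.isUnit_iff_isUnit_det],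
      ℓ₁, ℓ₂, hℓ₁, hℓ₂, by simpa using e₁, by simpa using e₂⟩
  · exact ⟨!![1, 1; 0, 1], by simp [Matrix.isUnit_iff_isUnit_det],
      ℓ₁, ℓ₂, hℓ₁, hℓ₂, by simpa using e₁, by simpa using e₂⟩

/-- Every Bockstein closed pair of homogeneous quadratic polynomials
`(q₁, q₂)` over `F₂` is diagonalizable: after an invertible `F₂`-linear change
`(q₁', q₂')ᵀ = N (q₁, q₂)ᵀ`, each component satisfies `β(qᵢ') = ℓᵢ qᵢ'` for some
homogeneous linear form `ℓᵢ`. -/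
theorem two_dimensional_bockstein_closed_diagonalizable {m : ℕ}
    (q₁ q₂ : MvPolynomial (Fin m) (ZMod 2))
    (h₁ : q₁.IsHomogeneous 2) (h₂ : q₂.IsHomogeneous 2)
    (hB₁ : bockstein q₁ ∈ Ideal.span {q₁, q₂})
    (hB₂ : bockstein q₂ ∈ Ideal.span {q₁, q₂}) :
    ∃ N : Matrix (Fin 2) (Fin 2) (ZMod 2), IsUnit N ∧
      ∃ ℓ₁ ℓ₂ : MvPolynomial (Fin m) (ZMod 2), ℓ₁.IsHomogeneous 1 ∧ ℓ₂.IsHomogeneous 1 ∧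
        bockstein (C (N 0 0) * q₁ + C (N 0 1) * q₂) =
          ℓ₁ * (C (N 0 0) * q₁ + C (N 0 1) * q₂) ∧
        bockstein (C (N 1 0) * q₁ + C (N 1 1) * q₂) =
          ℓ₂ * (C (N 1 0) * q₁ + C (N 1 1) * q₂) :=
  two_dimensional_bockstein_closed_diagonalizable_general q₁ q₂ h₁ h₂ hB₁ hB₂
end

section
/- Let L be a finite-dimensional Lie algebra over F₂ equipped with a 2-restricted squaring sq : L → L which is effective. If x ∈ L satisfies sq(x) + x ∈ Z(L), where Z(L) is the center of L, then x ∈ Z(L). -/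
/-!
The bracket term in `sq (x + y)` vanishes on commuting elements, so `z ↦ sq z - z` is an additive
endomorphism of the center, and effectiveness says that its kernel is trivial. On an Artinian
center an injective endomorphism is surjective, so `sq x - x = sq z - z` for some central `z`.
As `z` commutes with `x`, the difference `x - z` is fixed by `sq`, whence `x = z`.
-/

/-- A 2-restricted squaring on a Lie algebra. The axioms do not mention scalars, so the notion is
encoded on the underlying Lie ring. -/
structure IsTwoRestrictedSquaring {L : Type*} [LieRing L] (sq : L → L) : Prop where
  map_add : ∀ x y : L, sq (x + y) = sq x + sq y + ⁅x, y⁆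
  map_lie : ∀ x y : L, ⁅sq x, y⁆ = ⁅⁅x, y⁆, x⁆

/-- Effectiveness of a squaring: `0` is its only possible fixed point, which makes
`x ↦ sq x - x` injective wherever `sq` is additive. -/
def IsEffectiveSquaring {L : Type*} [Zero L] (sq : L → L) : Prop :=
  ∀ x : L, sq x = x → x = 0

namespace IsTwoRestrictedSquaring

variable {L : Type*} [LieRing L] {sq : L → L}

theorem map_sub_of_lie_eq_zero (hsq : IsTwoRestrictedSquaring sq) {a b : L} (hab : ⁅a, b⁆ = 0) :
    sq (a - b) = sq a - sq b := by
  have hlie : ⁅a - b, b⁆ = 0 := by rw [sub_lie, hab, lie_self, sub_zero]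
  have hadd := hsq.map_add (a - b) b
  rw [sub_add_cancel, hlie, add_zero] at hadd
  exact eq_sub_of_add_eq hadd.symm

theorem eq_of_sub_self_eq_sub_self (hsq : IsTwoRestrictedSquaring sq)
    (heff : IsEffectiveSquaring sq) {a b : L} (hab : ⁅a, b⁆ = 0) (h : sq a - a = sq b - b) :
    a = b := by
  have hfix : sq (a - b) = a - b := by
    rw [hsq.map_sub_of_lie_eq_zero hab]
    exact sub_eq_sub_iff_sub_eq_sub.mp h
  exact sub_eq_zero.mp (heff _ hfix)

variable {R : Type*} [CommRing R] [LieAlgebra R L]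

theorem map_mem_center (hsq : IsTwoRestrictedSquaring sq) {z : L}
    (hz : z ∈ LieAlgebra.center R L) : sq z ∈ LieAlgebra.center R L := by
  rw [LieModule.mem_maxTrivSubmodule] at hz ⊢
  intro y
  rw [← lie_skew, hsq.map_lie, hz, neg_zero]

variable (R) in
/-- The endomorphism `z ↦ sq z - z` of the center, used to solve `sq z - z = c` there.
It is bundled as an additive map because a squaring is typically only Frobenius-semilinear. -/
def centerSubSelf (hsq : IsTwoRestrictedSquaring sq) :
    LieAlgebra.center R L →+ LieAlgebra.center R L :=
  AddMonoidHom.mk' (fun z => ⟨sq z - z, sub_mem (hsq.map_mem_center z.2) z.2⟩) fun a b => by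
    have hab : ⁅(a : L), (b : L)⁆ = 0 := (LieModule.mem_maxTrivSubmodule R L L _).mp b.2 a
    ext
    simp only [LieSubmodule.coe_add, hsq.map_add, hab, add_zero, add_sub_add_comm]

theorem centerSubSelf_injective (hsq : IsTwoRestrictedSquaring sq)
    (heff : IsEffectiveSquaring sq) : Function.Injective (hsq.centerSubSelf R) := fun a b h =>
  Subtype.ext <| hsq.eq_of_sub_self_eq_sub_self heff
    ((LieModule.mem_maxTrivSubmodule R L L _).mp b.2 a) (congrArg Subtype.val h)

theorem centerSubSelf_surjective [IsArtinian ℤ (LieAlgebra.center R L)]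
    (hsq : IsTwoRestrictedSquaring sq) (heff : IsEffectiveSquaring sq) :
    Function.Surjective (hsq.centerSubSelf R) :=
  IsArtinian.surjective_of_injective_endomorphism (hsq.centerSubSelf R).toIntLinearMap
    (hsq.centerSubSelf_injective heff)

end IsTwoRestrictedSquaring

theorem central_mod_sq_implies_central_general
    {R L : Type*} [CommRing R] [LieRing L] [LieAlgebra R L] [IsArtinian ℤ (LieAlgebra.center R L)]
    {sq : L → L} (hsq : IsTwoRestrictedSquaring sq) (heff : IsEffectiveSquaring sq)
    {x : L} (hx : sq x - x ∈ LieAlgebra.center R L) :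
    x ∈ LieAlgebra.center R L := by
  obtain ⟨z, hz⟩ := hsq.centerSubSelf_surjective heff ⟨sq x - x, hx⟩
  have hxz : ⁅x, (z : L)⁆ = 0 := (LieModule.mem_maxTrivSubmodule R L L _).mp z.2 x
  rw [hsq.eq_of_sub_self_eq_sub_self heff hxz (congrArg Subtype.val hz).symm]
  exact z.2

/-- Let `L` be a finite-dimensional Lie algebra over `F₂` with an
effective 2-restricted squaring `sq`. If `sq(x) + x` is central, then `x` is central. -/
theorem central_mod_sq_implies_central
    {L : Type*} [LieRing L] [LieAlgebra (ZMod 2) L] [Module.Finite (ZMod 2) L]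
    (sq : L → L)
    (hsq1 : ∀ x y : L, sq (x + y) = sq x + sq y + ⁅x, y⁆)
    (hsq2 : ∀ x y : L, ⁅sq x, y⁆ = ⁅⁅x, y⁆, x⁆)
    (heff : ∀ x : L, sq x = x → x = 0)
    (x : L) (hx : sq x + x ∈ LieAlgebra.center (ZMod 2) L) :
    x ∈ LieAlgebra.center (ZMod 2) L := by
  have : Finite (LieAlgebra.center (ZMod 2) L) := Module.finite_of_finite (ZMod 2)
  rw [← ZModModule.sub_eq_add] at hx
  exact central_mod_sq_implies_central_general ⟨hsq1, hsq2⟩ heff hx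
end

section
/- Let L be a Lie algebra over F₂ equipped with a 2-restricted squaring sq : L → L which is Frattini. If x₀ ∈ L is such that the span of x₀ is a Lie ideal of L (i.e., for every y ∈ L, ⁅x₀, y⁆ lies in the F₂-span of x₀), then x₀ is central: ⁅x₀, y⁆ = 0 for all y ∈ L. -/
/-!
If the line through `m` is stable under a Lie algebra over the field with `q` elements, each `x`
acts on `m` through a scalar `c`. When `f x` acts as the `q`-th power of `x`, it acts on `m` through
`c ^ q = c`, so the differences `f x - x` annihilate `m`. For `q = 2` and the adjoint module these
differences are the elements `sq x + x`.
-/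

theorem end_pow_card_apply_of_apply_mem_span_singleton {K M : Type*} [Field K] [Fintype K]
    [AddCommGroup M] [Module K M] {T : Module.End K M} {m : M}
    (h : T m ∈ Submodule.span K {m}) : (T ^ Fintype.card K) m = T m := by
  obtain ⟨c, hc⟩ := Submodule.mem_span_singleton.1 h
  calc
    (T ^ Fintype.card K) m = c ^ Fintype.card K • m := by
      simpa using Module.End.aeval_apply_of_mem_apply_eq_smul
        (p := Polynomial.X ^ Fintype.card K) hc.symm
    _ = T m := by rw [FiniteField.pow_card, hc]

theorem lie_eq_zero_of_span_eq_top {R L M : Type*} [CommRing R] [LieRing L] [LieAlgebra R L]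
    [AddCommGroup M] [Module R M] [LieRingModule L M] [LieModule R L M] {s : Set L}
    (hs : Submodule.span R s = ⊤) {m : M} (h : ∀ x ∈ s, ⁅x, m⁆ = 0) (x : L) : ⁅x, m⁆ = 0 := by
  let orbitMap : L →ₗ[R] M := (LieModule.toEnd R L M : L →ₗ[R] Module.End R M).flip m
  have orbitMap_eq_zero : orbitMap = 0 := LinearMap.ext_on hs h
  exact LinearMap.congr_fun orbitMap_eq_zero x

theorem lie_eq_zero_of_lie_mem_span_singleton {K L M : Type*} [Field K] [Fintype K] [LieRing L]
    [LieAlgebra K L] [AddCommGroup M] [Module K M] [LieRingModule L M] [LieModule K L M]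
    {f : L → L}
    (hf : ∀ x, LieModule.toEnd K L M (f x) = LieModule.toEnd K L M x ^ Fintype.card K)
    (hspan : Submodule.span K {v : L | ∃ w : L, v = f w - w} = ⊤)
    {m : M} (hm : ∀ x : L, ⁅x, m⁆ ∈ Submodule.span K {m}) (x : L) : ⁅x, m⁆ = 0 := by
  refine lie_eq_zero_of_span_eq_top hspan ?_ x
  rintro _ ⟨w, rfl⟩
  have lie_f_eq_lie : ⁅f w, m⁆ = ⁅w, m⁆ := calc
    ⁅f w, m⁆ = (LieModule.toEnd K L M w ^ Fintype.card K) m := by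
      rw [← hf, LieModule.toEnd_apply_apply]
    _ = ⁅w, m⁆ := end_pow_card_apply_of_apply_mem_span_singleton (hm w)
  rw [sub_lie, lie_f_eq_lie, sub_self]

theorem ad_eq_ad_sq_of_lie_eq_lie_lie {R L : Type*} [CommRing R] [CharP R 2] [LieRing L]
    [LieAlgebra R L] {a x : L} (h : ∀ y : L, ⁅a, y⁆ = ⁅⁅x, y⁆, x⁆) :
    LieAlgebra.ad R L a = LieAlgebra.ad R L x ^ 2 := by
  ext y
  calc
    ⁅a, y⁆ = -⁅x, ⁅x, y⁆⁆ := by rw [h, lie_skew]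
    _ = ⁅x, ⁅x, y⁆⁆ := by rw [← neg_one_smul R, CharTwo.neg_eq, one_smul]
    _ = (LieAlgebra.ad R L x ^ 2) y := by rw [pow_two]; rfl

theorem one_dimensional_ideal_is_central_general {K L : Type*} [Field K] [Fintype K] [LieRing L]
    [LieAlgebra K L] (f : L → L)
    (hf : ∀ x, LieAlgebra.ad K L (f x) = LieAlgebra.ad K L x ^ Fintype.card K)
    (hfrat : Submodule.span K {v : L | ∃ w : L, v = f w - w} = ⊤)
    (x₀ : L) (hid : ∀ y : L, ⁅x₀, y⁆ ∈ Submodule.span K {x₀}) (y : L) : ⁅x₀, y⁆ = 0 := by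
  have lie_mem_span (x : L) : ⁅x, x₀⁆ ∈ Submodule.span K {x₀} := by
    rw [← lie_skew]
    exact neg_mem (hid x)
  rw [← lie_skew, lie_eq_zero_of_lie_mem_span_singleton hf hfrat lie_mem_span, neg_zero]

/-- Let `L` be a Lie algebra over `F₂` with a Frattini 2-restricted
squaring `sq`. If the span of `x₀` is a Lie ideal of `L`, then `x₀` is central. -/
theorem one_dimensional_ideal_is_central
    {L : Type*} [LieRing L] [LieAlgebra (ZMod 2) L]
    (sq : L → L)
    (hsq1 : ∀ x y : L, sq (x + y) = sq x + sq y + ⁅x, y⁆)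
    (hsq2 : ∀ x y : L, ⁅sq x, y⁆ = ⁅⁅x, y⁆, x⁆)
    (hfrat : Submodule.span (ZMod 2) {v : L | ∃ w : L, v = sq w + w} = ⊤)
    (x₀ : L) (hid : ∀ y : L, ⁅x₀, y⁆ ∈ Submodule.span (ZMod 2) {x₀}) :
    ∀ y : L, ⁅x₀, y⁆ = 0 :=
  one_dimensional_ideal_is_central_general sq (fun x ↦ ad_eq_ad_sq_of_lie_eq_lie_lie (hsq2 x))
    (by simpa only [ZModModule.sub_eq_add] using hfrat) x₀ hid
end
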